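/- Let P be the R-measure, c = (1/2, √3/6), and let ℓ ≥ 1 and n satisfy 3^ℓ < n ≤ 2·3^ℓ. Let α₂ be any optimal set of two-means for P and let J ⊆ {1,2,3}^ℓ with card J = n − 3^ℓ. Then the set { S_ω(c) : ω ∈ {1,2,3}^ℓ \ J } ∪ ⋃_{ω ∈ J} S_ω(α₂) is an optimal set of n-means for P, where S_ω(α₂) = {S_ω(a) : a ∈ α₂}. -/

import Mathlib

open MeasureTheory ENNReal

noncomputable section

abbrev E2 : Type := EuclideanSpace ℝ (Fin 2)

/-- The point (a, b) of the Euclidean plane. -/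
def pt (a b : ℝ) : E2 := (WithLp.equiv 2 (Fin 2 → ℝ)).symm ![a, b]

/-- S₁(x) = x/3. -/
def S1 : E2 → E2 := fun x => (3 : ℝ)⁻¹ • x

/-- S₂(x) = x/3 + (2/3, 0). -/
def S2 : E2 → E2 := fun x => (3 : ℝ)⁻¹ • x + pt (2/3) 0

/-- S₃(x) = x/3 + (1/3, √3/3). -/
def S3 : E2 → E2 := fun x => (3 : ℝ)⁻¹ • x + pt (1/3) (Real.sqrt 3 / 3)

def Smap : Fin 3 → E2 → E2 := ![S1, S2, S3]

/-- For a word ω = ω₁⋯ω_k ∈ {1,2,3}^k, the composition S_ω = S_{ω₁} ∘ ⋯ ∘ S_{ω_k}. -/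
def Sword {k : ℕ} (ω : Fin k → Fin 3) : E2 → E2 :=
  fun x => (List.ofFn fun i => Smap (ω i)).foldr (fun g y => g y) x

/-- The closed triangle with vertices (0,0), (1,0), (1/2, √3/2). -/
def Tri : Set E2 := convexHull ℝ {pt 0 0, pt 1 0, pt (1/2) (Real.sqrt 3 / 2)}

/-- The distortion error ∫ min_{a ∈ α} ‖x − a‖² dμ of a set α of points. -/
def err (μ : Measure E2) (α : Set E2) : ℝ≥0∞ :=
  ∫⁻ x, ⨅ a ∈ α, ENNReal.ofReal (‖x - a‖ ^ 2) ∂μ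

/-- The n-th quantization error V_n(μ). -/
def quantErr (μ : Measure E2) (n : ℕ) : ℝ≥0∞ :=
  ⨅ (α : Set E2) (_ : α.Finite ∧ α.ncard ≤ n), err μ α

/-- α is an optimal set of n-means for μ. -/
def IsOptimal (μ : Measure E2) (n : ℕ) (α : Set E2) : Prop :=
  α.Finite ∧ α.ncard ≤ n ∧ err μ α = quantErr μ n

/-- value of the affine function at the nine level-one vertices, barycentric coordinates -/
def ff (x y q : ℝ) : ℝ := (2 * x + y) / 3 - q / 2 - 5 / 54

def GG (a b c : ℝ) : ℝ :=
  let q := a ^ 2 + b ^ 2 + c ^ 2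
  (max (ff a a q) 0 + max (ff a b q) 0 + max (ff a c q) 0
  + max (ff b a q) 0 + max (ff b b q) 0 + max (ff b c q) 0
  + max (ff c a q) 0 + max (ff c b q) 0 + max (ff c c q) 0) / 9

lemma int_ineq : ∀ c1 c2 c3 c4 c5 c6 c7 c8 c9 : Fin 2,
    ∀ A, A = 2 * (c1.val + c2.val + c3.val) + (c1.val + c4.val + c7.val) →
    ∀ B, B = 2 * (c4.val + c5.val + c6.val) + (c2.val + c5.val + c8.val) →
    ∀ C, C = 2 * (c7.val + c8.val + c9.val) + (c3.val + c6.val + c9.val) →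
    ∀ N, N = c1.val + c2.val + c3.val + c4.val + c5.val + c6.val + c7.val + c8.val + c9.val →
     A ^ 2 + B ^ 2 + C ^ 2 + 2 * N * N ≤ A * B + B * C + C * A + 18 * N := by
  simp only [forall_eq]
  decide +kernel

lemma quad_bound (A B C N a b c : ℝ) (h : a + b + c = 1) (hA : A + B + C = 3 * N) (hN : 0 ≤ N)
    (key : A ^ 2 + B ^ 2 + C ^ 2 + 2 * N * N ≤ A * B + B * C + C * A + 18 * N) :
    (A * a + B * b + C * c) / 3 - N * ((a ^ 2 + b ^ 2 + c ^ 2) / 2 + 5 / 54) ≤ 2 / 3 := by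
  obtain rfl : C = 3 * N - A - B := by linarith
  obtain rfl : c = 1 - a - b := by linarith
  rcases hN.eq_or_lt with h0 | h0
  · subst h0
    have hA0 : A = 0 := by nlinarith [sq_nonneg (A + 2 * B), sq_nonneg A]
    have hB0 : B = 0 := by nlinarith [sq_nonneg (A + 2 * B), sq_nonneg B]
    subst hA0 hB0; norm_num
  · refine le_of_mul_le_mul_left ?_ h0
    nlinarith [sq_nonneg (3 * N * a - A), sq_nonneg (3 * N * b - B),
      sq_nonneg (3 * N * (1 - a - b) - (3 * N - A - B))]

lemma max_coef (f : ℝ) : ∃ c : Fin 2, max f 0 = (c.val : ℝ) * f := by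
  rcases le_total f 0 with h | h
  · exact ⟨0, by simp [h]⟩
  · exact ⟨1, by simp [h]⟩

lemma GG_nonneg (a b c : ℝ) : 0 ≤ GG a b c := by
  unfold GG; positivity

lemma GG_le (a b c : ℝ) (h : a + b + c = 1) : GG a b c ≤ 2 / 27 := by
  obtain ⟨c1, h1⟩ := max_coef (ff a a (a ^ 2 + b ^ 2 + c ^ 2))
  obtain ⟨c2, h2⟩ := max_coef (ff a b (a ^ 2 + b ^ 2 + c ^ 2))
  obtain ⟨c3, h3⟩ := max_coef (ff a c (a ^ 2 + b ^ 2 + c ^ 2))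
  obtain ⟨c4, h4⟩ := max_coef (ff b a (a ^ 2 + b ^ 2 + c ^ 2))
  obtain ⟨c5, h5⟩ := max_coef (ff b b (a ^ 2 + b ^ 2 + c ^ 2))
  obtain ⟨c6, h6⟩ := max_coef (ff b c (a ^ 2 + b ^ 2 + c ^ 2))
  obtain ⟨c7, h7⟩ := max_coef (ff c a (a ^ 2 + b ^ 2 + c ^ 2))
  obtain ⟨c8, h8⟩ := max_coef (ff c b (a ^ 2 + b ^ 2 + c ^ 2))
  obtain ⟨c9, h9⟩ := max_coef (ff c c (a ^ 2 + b ^ 2 + c ^ 2))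
  have key := int_ineq c1 c2 c3 c4 c5 c6 c7 c8 c9 _ rfl _ rfl _ rfl _ rfl
  unfold GG
  simp only [h1, h2, h3, h4, h5, h6, h7, h8, h9]
  have key' : ((_ : ℕ) : ℝ) ≤ ((_ : ℕ) : ℝ) := Nat.cast_le.mpr key
  push_cast at key'
  have hb := quad_bound _ _ _ _ a b c h ?_ ?_ key'
  · unfold ff
    linarith
  · ring
  · positivity

lemma GG_pos (a b c : ℝ) (h : 0 < GG a b c) :
    0 < ff a a (a ^ 2 + b ^ 2 + c ^ 2) ∨ 0 < ff b b (a ^ 2 + b ^ 2 + c ^ 2) ∨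
      0 < ff c c (a ^ 2 + b ^ 2 + c ^ 2) := by
  by_contra! hc
  obtain ⟨h1, h2, h3⟩ := hc
  simp only [GG, ff] at *
  rw [max_eq_right, max_eq_right, max_eq_right, max_eq_right, max_eq_right, max_eq_right,
    max_eq_right, max_eq_right, max_eq_right] at h
  all_goals linarith

lemma GG_swap12 (a b c : ℝ) : GG a b c = GG b a c := by
  unfold GG
  rw [show b ^ 2 + a ^ 2 + c ^ 2 = a ^ 2 + b ^ 2 + c ^ 2 by ring]; ring

lemma GG_swap23 (a b c : ℝ) : GG a b c = GG a c b := by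
  unfold GG
  rw [show a ^ 2 + c ^ 2 + b ^ 2 = a ^ 2 + b ^ 2 + c ^ 2 by ring]; ring

set_option maxHeartbeats 2000000 in
/-- If the first two pieces both see the point, the first one sees it only near its second vertex. -/
lemma pair (x y z : ℝ) (h : x + y + z = 1) (h1 : 0 < GG (3 * x - 2) (3 * y) (3 * z))
    (h2 : 0 < GG (3 * x) (3 * y - 2) (3 * z)) :
    GG (3 * x - 2) (3 * y) (3 * z) ≤ 1 / 27 ∧
    0 < ff (3 * y) (3 * y) ((3 * x - 2) ^ 2 + (3 * y) ^ 2 + (3 * z) ^ 2) ∧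
    ff (3 * z) (3 * z) ((3 * x - 2) ^ 2 + (3 * y) ^ 2 + (3 * z) ^ 2) ≤ 0 := by
  obtain rfl : z = 1 - x - y := by linarith
  have hA : 0 < ff (3 * y) (3 * y) ((3 * x - 2) ^ 2 + (3 * y) ^ 2 + (3 * (1 - x - y)) ^ 2) ∧
      0 < ff (3 * x) (3 * x) ((3 * x) ^ 2 + (3 * y - 2) ^ 2 + (3 * (1 - x - y)) ^ 2) := by
    rcases GG_pos _ _ _ h1 with h3 | h3 | h3 <;> rcases GG_pos _ _ _ h2 with h4 | h4 | h4
    · exfalso; unfold ff at h3 h4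
      linarith [sq_nonneg (3 * x - 2), sq_nonneg (3 * y - 1), sq_nonneg (3 * (1 - x - y) - 0)]
    · exfalso; unfold ff at h3 h4
      linarith [sq_nonneg (3 * x - 3/2), sq_nonneg (3 * y - 3/2), sq_nonneg (3 * (1 - x - y) - 0)]
    · exfalso; unfold ff at h3 h4
      linarith [sq_nonneg (3 * x - 3/2), sq_nonneg (3 * y - 1), sq_nonneg (3 * (1 - x - y) - 1/2)]
    · exact ⟨h3, h4⟩
    · exfalso; unfold ff at h3 h4
      linarith [sq_nonneg (3 * x - 1), sq_nonneg (3 * y - 2), sq_nonneg (3 * (1 - x - y) - 0)]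
    · exfalso; unfold ff at h3 h4
      linarith [sq_nonneg (3 * x - 1), sq_nonneg (3 * y - 3/2), sq_nonneg (3 * (1 - x - y) - 1/2)]
    · exfalso; unfold ff at h3 h4
      linarith [sq_nonneg (3 * x - 3/2), sq_nonneg (3 * y - 1), sq_nonneg (3 * (1 - x - y) - 1/2)]
    · exfalso; unfold ff at h3 h4
      linarith [sq_nonneg (3 * x - 1), sq_nonneg (3 * y - 3/2), sq_nonneg (3 * (1 - x - y) - 1/2)]
    · exfalso; unfold ff at h3 h4
      linarith [sq_nonneg (3 * x - 1), sq_nonneg (3 * y - 1), sq_nonneg (3 * (1 - x - y) - 1)]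
  obtain ⟨h3, h4⟩ := hA
  set q := (3 * x - 2) ^ 2 + (3 * y) ^ 2 + (3 * (1 - x - y)) ^ 2 with hq
  obtain ⟨s, hs⟩ : ∃ s, s = (1 - 3 * (x - y)) / 2 := ⟨_, rfl⟩
  obtain ⟨t, ht⟩ : ∃ t, t = 3 * (1 - x - y) := ⟨_, rfl⟩
  obtain rfl : x = 1 / 2 - t / 6 + (1 - 2 * s) / 6 := by linarith
  obtain rfl : y = 1 / 2 - t / 6 - (1 - 2 * s) / 6 := by linarith
  have e3 : ff (3 * (1 / 2 - t / 6 - (1 - 2 * s) / 6)) (3 * (1 / 2 - t / 6 - (1 - 2 * s) / 6)) q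
      = 11 / 27 - s ^ 2 - 3 / 4 * t ^ 2 := by rw [hq]; unfold ff; ring
  have hs1 : (36 : ℝ) / 100 ≤ s := by
    unfold ff at h4
    nlinarith [sq_nonneg t]
  have hs2 : ((36 : ℝ) / 100) ^ 2 ≤ s ^ 2 := by gcongr
  have f1 : ff (3 * (1 / 2 - t / 6 - (1 - 2 * s) / 6)) (3 * (1 / 2 - t / 6 + (1 - 2 * s) / 6) - 2) q
      ≤ 0 := by
    unfold ff at *
    linarith [sq_nonneg t]
  have f3 : ff (3 * (1 / 2 - t / 6 - (1 - 2 * s) / 6)) (3 * (1 -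
      (1 / 2 - t / 6 + (1 - 2 * s) / 6) - (1 / 2 - t / 6 - (1 - 2 * s) / 6))) q ≤ 0 := by
    unfold ff at *
    linarith [sq_nonneg (t - 1 / 3)]
  have f2 : ff (3 * (1 / 2 - t / 6 - (1 - 2 * s) / 6)) (3 * (1 / 2 - t / 6 - (1 - 2 * s) / 6)) q
      ≤ 1 / 3 := by
    rw [e3]
    linarith [sq_nonneg t]
  clear_value q
  clear h1 h2 h4 h hs ht e3
  simp only [GG, ← hq, ff] at *
  refine ⟨?_, h3, by linarith⟩
  rw [max_eq_right, max_eq_right, max_eq_right, max_eq_right, max_eq_left, max_eq_right,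
    max_eq_right, max_eq_right, max_eq_right]
  all_goals linarith

lemma pair_sum (x y z : ℝ) (h : x + y + z = 1) :
    GG (3 * x - 2) (3 * y) (3 * z) + GG (3 * x) (3 * y - 2) (3 * z) + GG (3 * x) (3 * y) (3 * z - 2)
      ≤ 2 / 27 := by
  have n1 := GG_nonneg (3 * x - 2) (3 * y) (3 * z)
  have n2 := GG_nonneg (3 * x) (3 * y - 2) (3 * z)
  have n3 := GG_nonneg (3 * x) (3 * y) (3 * z - 2)
  have l1 := GG_le (3 * x - 2) (3 * y) (3 * z) (by linarith)
  have l2 := GG_le (3 * x) (3 * y - 2) (3 * z) (by linarith)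
  have l3 := GG_le (3 * x) (3 * y) (3 * z - 2) (by linarith)
  rcases n1.eq_or_lt with e1 | p1 <;> rcases n2.eq_or_lt with e2 | p2 <;>
    rcases n3.eq_or_lt with e3 | p3
  · linarith
  · linarith
  · linarith
  · have a1 := (pair y z x (by linarith) (by rw [GG_swap23, GG_swap12]; exact p2)
      (by rw [GG_swap23, GG_swap12]; exact p3)).1
    have a2 := (pair z y x (by linarith) (by rw [GG_swap12, GG_swap23, GG_swap12]; exact p3)
      (by rw [GG_swap12, GG_swap23, GG_swap12]; exact p2)).1
    rw [GG_swap23, GG_swap12] at a1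
    rw [GG_swap12, GG_swap23, GG_swap12] at a2
    linarith
  · linarith
  · have a1 := (pair x z y (by linarith) (by rw [GG_swap23]; exact p1)
      (by rw [GG_swap23]; exact p3)).1
    have a2 := (pair z x y (by linarith) (by rw [GG_swap12, GG_swap23]; exact p3)
      (by rw [GG_swap12, GG_swap23]; exact p1)).1
    rw [GG_swap23] at a1
    rw [GG_swap12, GG_swap23] at a2
    linarith
  · have a1 := (pair x y z h p1 p2).1
    have a2 := (pair y x z (by linarith) (by rw [GG_swap12]; exact p2)
      (by rw [GG_swap12]; exact p1)).1
    rw [GG_swap12] at a2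
    linarith
  · have a1 := (pair x y z h p1 p2).2.2
    have a2 := (pair x z y (by linarith) (by rw [GG_swap23]; exact p1)
      (by rw [GG_swap23]; exact p3)).2.1
    unfold ff at a1 a2
    linarith

def HH : ℕ → ℝ → ℝ → ℝ → ℝ
  | 0 => GG
  | n + 1 => fun x y z => HH n (3 * x - 2) (3 * y) (3 * z) + HH n (3 * x) (3 * y - 2) (3 * z)
      + HH n (3 * x) (3 * y) (3 * z - 2)

lemma HH_nonneg (n : ℕ) : ∀ x y z, 0 ≤ HH n x y z := by
  induction n with
  | zero => exact GG_nonneg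
  | succ n ih =>
    intro x y z
    simp only [HH]
    linarith [ih (3 * x - 2) (3 * y) (3 * z),
      ih (3 * x) (3 * y - 2) (3 * z), ih (3 * x) (3 * y) (3 * z - 2)]

lemma GG_supp (x y z : ℝ) (h : x + y + z = 1) (hp : 0 < GG x y z) :
    -1 < x ∧ -1 < y ∧ -1 < z := by
  obtain rfl : z = 1 - x - y := by linarith
  have := GG_pos _ _ _ hp
  unfold ff at this
  rcases this with h3 | h3 | h3 <;> refine ⟨?_, ?_, ?_⟩ <;>
    nlinarith [sq_nonneg (x - y), sq_nonneg (x + 2 * y - 1), sq_nonneg (2 * x + y - 1),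
      sq_nonneg (x + 2 * y), sq_nonneg (2 * x + y), sq_nonneg (x + 2 * y - 2),
      sq_nonneg (2 * x + y - 2), sq_nonneg (x - y - 1), sq_nonneg (x - y + 1)]

lemma HH_supp (n : ℕ) : ∀ x y z, x + y + z = 1 → 0 < HH (n + 1) x y z →
    -(1 / 3) < x ∧ -(1 / 3) < y ∧ -(1 / 3) < z := by
  induction n with
  | zero =>
    intro x y z h hp
    simp only [HH] at hp
    have n1 := GG_nonneg (3 * x - 2) (3 * y) (3 * z)
    have n2 := GG_nonneg (3 * x) (3 * y - 2) (3 * z)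
    rcases n1.eq_or_lt with e1 | p1
    · rcases n2.eq_or_lt with e2 | p2
      · obtain ⟨a, b, c⟩ := GG_supp (3 * x) (3 * y) (3 * z - 2) (by linarith) (by linarith)
        exact ⟨by linarith, by linarith, by linarith⟩
      · obtain ⟨a, b, c⟩ := GG_supp (3 * x) (3 * y - 2) (3 * z) (by linarith) (by linarith)
        exact ⟨by linarith, by linarith, by linarith⟩
    · obtain ⟨a, b, c⟩ := GG_supp (3 * x - 2) (3 * y) (3 * z) (by linarith) (by linarith)
      exact ⟨by linarith, by linarith, by linarith⟩
  | succ n ih =>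
    intro x y z h hp
    unfold HH at hp
    have n1 := HH_nonneg (n + 1) (3 * x - 2) (3 * y) (3 * z)
    have n2 := HH_nonneg (n + 1) (3 * x) (3 * y - 2) (3 * z)
    rcases n1.eq_or_lt with e1 | p1
    · rcases n2.eq_or_lt with e2 | p2
      · obtain ⟨a, b, c⟩ := ih (3 * x) (3 * y) (3 * z - 2) (by linarith) (by linarith)
        exact ⟨by linarith, by linarith, by linarith⟩
      · obtain ⟨a, b, c⟩ := ih (3 * x) (3 * y - 2) (3 * z) (by linarith) (by linarith)
        exact ⟨by linarith, by linarith, by linarith⟩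
    · obtain ⟨a, b, c⟩ := ih (3 * x - 2) (3 * y) (3 * z) (by linarith) (by linarith)
      exact ⟨by linarith, by linarith, by linarith⟩

lemma HH_le (n : ℕ) : ∀ x y z, x + y + z = 1 → HH (n + 1) x y z ≤ 2 / 27 := by
  induction n with
  | zero => intro x y z h; simp only [HH]; exact pair_sum x y z h
  | succ n ih =>
    intro x y z h
    unfold HH
    have n1 := HH_nonneg (n + 1) (3 * x - 2) (3 * y) (3 * z)
    have n2 := HH_nonneg (n + 1) (3 * x) (3 * y - 2) (3 * z)
    have n3 := HH_nonneg (n + 1) (3 * x) (3 * y) (3 * z - 2)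
    have l1 := ih (3 * x - 2) (3 * y) (3 * z) (by linarith)
    have l2 := ih (3 * x) (3 * y - 2) (3 * z) (by linarith)
    have l3 := ih (3 * x) (3 * y) (3 * z - 2) (by linarith)
    have s1 := HH_supp n (3 * x - 2) (3 * y) (3 * z) (by linarith)
    have s2 := HH_supp n (3 * x) (3 * y - 2) (3 * z) (by linarith)
    have s3 := HH_supp n (3 * x) (3 * y) (3 * z - 2) (by linarith)
    rcases n1.eq_or_lt with e1 | p1 <;> rcases n2.eq_or_lt with e2 | p2 <;>
      rcases n3.eq_or_lt with e3 | p3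
    · linarith
    · linarith
    · linarith
    · linarith [(s2 p2).2.1, (s3 p3).2.2, (s2 p2).1]
    · linarith
    · linarith [(s1 p1).1, (s3 p3).2.2, (s1 p1).2.1]
    · linarith [(s2 p2).2.1, (s1 p1).1, (s1 p1).2.2]
    · linarith [(s2 p2).2.1, (s1 p1).1, (s1 p1).2.2]

/-- Barycentric coordinates. -/
def bc (j : Fin 3) (x : E2) : ℝ :=
  ![1 - x 0 - x 1 / √3, x 0 - x 1 / √3, 2 * x 1 / √3] j

/-- Translation parts. -/
def tr : Fin 3 → E2 := ![0, pt (2/3) 0, pt (1/3) (Real.sqrt 3 / 3)]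

/-- Inverses of the similarities. -/
def Tm (i : Fin 3) (x : E2) : E2 := (3 : ℝ) • (x - tr i)

/-- The centre. -/
def cc : E2 := pt (1/2) (Real.sqrt 3 / 6)

lemma pt_zero (a b : ℝ) : pt a b 0 = a := by simp [pt]
lemma pt_one (a b : ℝ) : pt a b 1 = b := by simp [pt]

lemma Smap_eq (i : Fin 3) (x : E2) : Smap i x = (3 : ℝ)⁻¹ • x + tr i := by
  fin_cases i <;> simp [Smap, tr, S1, S2, S3]

lemma Tm_Smap (i : Fin 3) (x : E2) : Tm i (Smap i x) = x := by
  rw [Smap_eq, Tm]; simp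

lemma Smap_sub (i : Fin 3) (x a : E2) : Smap i x - a = (3 : ℝ)⁻¹ • (x - Tm i a) := by
  rw [Smap_eq, Tm, smul_sub, smul_smul]; norm_num; abel

lemma Smap_dist (i : Fin 3) (x a : E2) : ‖Smap i x - a‖ ^ 2 = ‖x - Tm i a‖ ^ 2 / 9 := by
  rw [Smap_sub, norm_smul, mul_pow]; norm_num; ring

lemma bc_sum (x : E2) : bc 0 x + bc 1 x + bc 2 x = 1 := by
  simp [bc]; ring

lemma s3 : √3 * √3 = 3 := Real.mul_self_sqrt (by norm_num)
lemma s3pos : 0 < √3 := by positivity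

lemma bc_tr (i j : Fin 3) (x : E2) : bc j (Smap i x) = bc j x / 3 + if i = j then 2 / 3 else 0 := by
  have h := s3
  have h' := s3pos.ne'
  rw [Smap_eq]
  fin_cases i <;> fin_cases j <;> simp [bc, tr, pt_zero, pt_one] <;> field_simp <;> ring_nf

lemma bc_Tm (i j : Fin 3) (x : E2) : bc j (Tm i x) = 3 * bc j x - if i = j then 2 else 0 := by
  have : x = Smap i (Tm i x) := by rw [Smap_eq, Tm, smul_smul]; simp
  conv_rhs => rw [this, bc_tr]
  split_ifs <;> ring

lemma dist_bc (x a : E2) : ‖x - a‖ ^ 2 =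
    ((bc 0 x - bc 0 a) ^ 2 + (bc 1 x - bc 1 a) ^ 2 + (bc 2 x - bc 2 a) ^ 2) / 2 := by
  have h := s3
  have h' := s3pos.ne'
  rw [EuclideanSpace.norm_sq_eq]
  simp [bc, Fin.sum_univ_two]
  field_simp
  ring_nf
  rw [show √3 ^ 2 = 3 by nlinarith]
  ring

lemma bc_cc (j : Fin 3) : bc j cc = 1 / 3 := by
  have h := s3
  have h' := s3pos.ne'
  fin_cases j <;> simp [bc, cc, pt_zero, pt_one] <;> field_simp <;> norm_num

lemma bc_cont (j : Fin 3) : Continuous (bc j) := by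
  have h0 : Continuous fun x : E2 => x 0 := by fun_prop
  have h1 : Continuous fun x : E2 => x 1 := by fun_prop
  have e : bc j = fun x => ![1 - x 0 - x 1 / √3, x 0 - x 1 / √3, 2 * x 1 / √3] j := rfl
  rw [e]
  fin_cases j <;> simp <;> fun_prop

lemma bc_meas (j : Fin 3) : Measurable (bc j) := (bc_cont j).measurable

lemma Smap_cont (i : Fin 3) : Continuous (Smap i) := by
  have : Smap i = fun x => (3 : ℝ)⁻¹ • x + tr i := funext (Smap_eq i)
  rw [this]; fun_prop

/-- Self-similarity. -/
def SS (P : Measure E2) : Prop := P = (3 : ℝ≥0∞)⁻¹ • (P.map S1 + P.map S2 + P.map S3)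

lemma lint_self {P : Measure E2} (hP : SS P) {f : E2 → ℝ≥0∞} (hf : Measurable f) :
    ∫⁻ x, f x ∂P = 3⁻¹ * ∑ i, ∫⁻ x, f (Smap i x) ∂P := by
  have m1 : Measurable S1 := (Smap_cont 0).measurable
  have m2 : Measurable S2 := (Smap_cont 1).measurable
  have m3 : Measurable S3 := (Smap_cont 2).measurable
  conv_lhs => rw [hP]
  rw [lintegral_smul_measure, lintegral_add_measure, lintegral_add_measure,
    lintegral_map hf m1, lintegral_map hf m2, lintegral_map hf m3, Fin.sum_univ_three]
  simp [Smap]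

lemma meas_self {P : Measure E2} (hP : SS P) {A : Set E2} (hA : MeasurableSet A) :
    P A = 3⁻¹ * ∑ i, P (Smap i ⁻¹' A) := by
  have := lint_self hP (f := A.indicator 1) (measurable_one.indicator hA)
  rw [lintegral_indicator_one hA] at this
  rw [this]
  congr 1
  refine Finset.sum_congr rfl fun i _ => ?_
  rw [← lintegral_indicator_one ((Smap_cont i).measurable hA)]
  rfl

lemma meas_step {P : Measure E2} (hP : SS P) (j : Fin 3) {t : ℝ} (_ht : 0 ≤ t) :
    P {x | bc j x < -t} ≤ P {x | bc j x < -(3 * t)} := by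
  rw [meas_self hP (measurableSet_lt (bc_meas j) measurable_const)]
  calc _ ≤ 3⁻¹ * ∑ i : Fin 3, P {x | bc j x < -(3 * t)} := by
        gcongr with i _
        intro x hx
        simp only [Set.mem_preimage, Set.mem_ofPred_eq, bc_tr] at hx ⊢
        split_ifs at hx <;> linarith
    _ = _ := by
        simp [← mul_assoc, ENNReal.inv_mul_cancel]

lemma meas_zero {P : Measure E2} [IsProbabilityMeasure P] (hP : SS P) (j : Fin 3) {t : ℝ}
    (ht : 0 < t) : P {x | bc j x < -t} = 0 := by
  have h1 : ∀ n : ℕ, P {x | bc j x < -t} ≤ P {x | bc j x < -(3 ^ n * t)} := by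
    intro n
    induction n with
    | zero => simp
    | succ n ih =>
      refine ih.trans ((meas_step hP j (by positivity)).trans (le_of_eq ?_))
      rw [pow_succ']; ring_nf
  have h2 : Filter.Tendsto (fun n : ℕ => P {x | bc j x < -(3 ^ n * t)}) Filter.atTop
      (nhds (P (⋂ n : ℕ, {x | bc j x < -(3 ^ n * t)}))) := by
    refine tendsto_measure_iInter_atTop (fun n =>
      (measurableSet_lt (bc_meas j) measurable_const).nullMeasurableSet) ?_ ⟨0, measure_ne_top _ _⟩
    intro m n hmn x hx
    simp only [Set.mem_ofPred_eq] at hx ⊢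
    have : (3 : ℝ) ^ m * t ≤ 3 ^ n * t := by gcongr; norm_num
    linarith
  have h3 : (⋂ n : ℕ, {x : E2 | bc j x < -(3 ^ n * t)}) = ∅ := by
    ext x
    simp only [Set.mem_iInter, Set.mem_ofPred_eq, Set.mem_empty_iff_false, iff_false, not_forall,
      not_lt]
    obtain ⟨n, hn⟩ := pow_unbounded_of_one_lt (-bc j x / t) (by norm_num : (1 : ℝ) < 3)
    rw [div_lt_iff₀ ht] at hn
    exact ⟨n, by linarith⟩
  rw [h3, measure_empty] at h2
  exact le_antisymm (ge_of_tendsto' h2 h1) bot_le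

lemma bc_nonneg {P : Measure E2} [IsProbabilityMeasure P] (hP : SS P) (j : Fin 3) :
    ∀ᵐ x ∂P, 0 ≤ bc j x := by
  have : ∀ n : ℕ, ∀ᵐ x ∂P, -(1 / ((n : ℝ) + 1)) ≤ bc j x := by
    intro n
    have := meas_zero hP j (t := 1 / ((n : ℝ) + 1)) (by positivity)
    rw [ae_iff]; simpa only [not_le] using this
  filter_upwards [ae_all_iff.mpr this] with x hx
  by_contra! hc
  obtain ⟨n, hn⟩ := exists_nat_one_div_lt (neg_pos.mpr hc)
  linarith [hx n]

lemma bc_bound {P : Measure E2} [IsProbabilityMeasure P] (hP : SS P) :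
    ∀ᵐ x ∂P, ∀ j, 0 ≤ bc j x ∧ bc j x ≤ 1 := by
  filter_upwards [bc_nonneg hP 0, bc_nonneg hP 1, bc_nonneg hP 2] with x h0 h1 h2 j
  have := bc_sum x
  fin_cases j <;> simp only [Fin.zero_eta, Fin.mk_one, Fin.reduceFinMk] <;> constructor <;> linarith

/-- Continuous functions are integrable if bounded in terms of barycentric coordinates. -/
lemma bc_int {P : Measure E2} [IsProbabilityMeasure P] (hP : SS P) (j : Fin 3) :
    Integrable (bc j) P := by
  refine Integrable.of_bound (bc_meas j).aestronglyMeasurable 1 ?_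
  filter_upwards [bc_bound hP] with x hx
  rw [Real.norm_eq_abs, abs_of_nonneg (hx j).1]; exact (hx j).2

lemma bc_sq_int {P : Measure E2} [IsProbabilityMeasure P] (hP : SS P) (j : Fin 3) :
    Integrable (fun x => bc j x ^ 2) P := by
  refine Integrable.of_bound ((bc_meas j).pow_const 2).aestronglyMeasurable 1 ?_
  filter_upwards [bc_bound hP] with x hx
  rw [Real.norm_eq_abs, abs_of_nonneg (by positivity)]
  exact pow_le_one₀ (hx j).1 (hx j).2

lemma int_self {P : Measure E2} (hP : SS P) {f : E2 → ℝ} (hf : Measurable f)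
    (hi : ∀ i, Integrable (fun x => f (Smap i x)) P) :
    ∫ x, f x ∂P = 3⁻¹ * ∑ i, ∫ x, f (Smap i x) ∂P := by
  have m1 : Measurable S1 := (Smap_cont 0).measurable
  have m2 : Measurable S2 := (Smap_cont 1).measurable
  have m3 : Measurable S3 := (Smap_cont 2).measurable
  have i1 : Integrable f (P.map S1) :=
    (integrable_map_measure hf.aestronglyMeasurable m1.aemeasurable).mpr (hi 0)
  have i2 : Integrable f (P.map S2) :=
    (integrable_map_measure hf.aestronglyMeasurable m2.aemeasurable).mpr (hi 1)
  have i3 : Integrable f (P.map S3) :=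
    (integrable_map_measure hf.aestronglyMeasurable m3.aemeasurable).mpr (hi 2)
  conv_lhs => rw [hP]
  rw [integral_smul_measure, integral_add_measure (i1.add_measure i2) i3,
    integral_add_measure i1 i2,
    integral_map m1.aemeasurable hf.aestronglyMeasurable,
    integral_map m2.aemeasurable hf.aestronglyMeasurable,
    integral_map m3.aemeasurable hf.aestronglyMeasurable, Fin.sum_univ_three]
  simp [Smap]

lemma bc_mean {P : Measure E2} [IsProbabilityMeasure P] (hP : SS P) (j : Fin 3) :
    ∫ x, bc j x ∂P = 1 / 3 := by
  have hi := bc_int hP j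
  have h := int_self hP (bc_meas j) (fun i => by
    simp only [bc_tr]; exact (hi.div_const 3).add (integrable_const _))
  simp only [bc_tr] at h
  have e : ∀ i : Fin 3, ∫ x, (bc j x / 3 + if i = j then (2:ℝ) / 3 else 0) ∂P
      = (∫ x, bc j x ∂P) / 3 + if i = j then 2 / 3 else 0 := by
    intro i
    rw [integral_add (hi.div_const 3) (integrable_const _), integral_div]; simp
  simp only [e, Finset.sum_add_distrib, Finset.sum_ite_eq', Finset.sum_const] at h
  simp at h
  linarith

lemma bc_sq_mean {P : Measure E2} [IsProbabilityMeasure P] (hP : SS P) (j : Fin 3) :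
    ∫ x, bc j x ^ 2 ∂P = 2 / 9 := by
  have hi := bc_int hP j
  have hi2 := bc_sq_int hP j
  have hm := bc_mean hP j
  have eq : ∀ (i : Fin 3) x, bc j (Smap i x) ^ 2 = bc j x ^ 2 / 9 +
      ((if i = j then (4 : ℝ) / 9 else 0) * bc j x + if i = j then 4 / 9 else 0) := by
    intro i x; rw [bc_tr]; split_ifs <;> ring
  have h := int_self hP ((bc_meas j).pow_const 2) (fun i => by
    simp only [eq]
    exact (hi2.div_const 9).add ((hi.const_mul _).add (integrable_const _)))
  simp only [eq] at h
  have e : ∀ i : Fin 3, ∫ x, (bc j x ^ 2 / 9 +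
      ((if i = j then (4 : ℝ) / 9 else 0) * bc j x + if i = j then 4 / 9 else 0)) ∂P
      = (∫ x, bc j x ^ 2 ∂P) / 9 + if i = j then 16 / 27 else 0 := by
    intro i
    have hr : Integrable (fun x => (if i = j then (4 : ℝ) / 9 else 0) * bc j x +
        if i = j then (4 : ℝ) / 9 else 0) P := (hi.const_mul _).add (integrable_const _)
    rw [integral_add (hi2.div_const 9) hr,
      integral_add (hi.const_mul _) (integrable_const _), integral_div, integral_const_mul, hm]
    split_ifs <;> simp <;> norm_num
  simp only [e, Finset.sum_add_distrib, Finset.sum_ite_eq', Finset.sum_const] at h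
  simp at h
  linarith

/-- Second moment about any point. -/
lemma second_moment {P : Measure E2} [IsProbabilityMeasure P] (hP : SS P) (a : E2) :
    Integrable (fun x => ‖x - a‖ ^ 2) P ∧ ∫ x, ‖x - a‖ ^ 2 ∂P = 1 / 6 + ‖cc - a‖ ^ 2 := by
  have e : ∀ x, ‖x - a‖ ^ 2 = ∑ j, (bc j x ^ 2 / 2 + (-bc j a * bc j x + bc j a ^ 2 / 2)) := by
    intro x; rw [dist_bc, Fin.sum_univ_three]; ring
  have hi : ∀ j, Integrable (fun x => bc j x ^ 2 / 2 + (-bc j a * bc j x + bc j a ^ 2 / 2)) P :=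
    fun j => ((bc_sq_int hP j).div_const 2).add
      (((bc_int hP j).const_mul _).add (integrable_const _))
  simp only [e]
  refine ⟨integrable_finsetSum _ fun j _ => hi j, ?_⟩
  rw [integral_finsetSum _ fun j _ => hi j]
  have e2 : ∀ j, ∫ x, (bc j x ^ 2 / 2 + (-bc j a * bc j x + bc j a ^ 2 / 2)) ∂P
      = 1 / 9 + (-bc j a / 3 + bc j a ^ 2 / 2) := by
    intro j
    have hr : Integrable (fun x => -bc j a * bc j x + bc j a ^ 2 / 2) P :=
      ((bc_int hP j).const_mul _).add (integrable_const _)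
    rw [integral_add ((bc_sq_int hP j).div_const 2) hr,
      integral_add ((bc_int hP j).const_mul _) (integrable_const _), integral_div,
      integral_const_mul, bc_mean hP, bc_sq_mean hP]
    simp; ring
  simp only [e2, bc_cc]
  rw [Fin.sum_univ_three, Fin.sum_univ_three]
  have := bc_sum a
  linarith

lemma second_moment_l {P : Measure E2} [IsProbabilityMeasure P] (hP : SS P) (a : E2) :
    ∫⁻ x, ENNReal.ofReal (‖x - a‖ ^ 2) ∂P = ENNReal.ofReal (1 / 6 + ‖cc - a‖ ^ 2) := by
  rw [← (second_moment hP a).2, ofReal_integral_eq_lintegral_ofReal (second_moment hP a).1]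
  exact Filter.Eventually.of_forall fun x => by positivity

/-- Distortion of an indexed family. -/
def erf (P : Measure E2) (s : Finset E2) (a : E2 → E2) : ℝ≥0∞ :=
  ∫⁻ x, ⨅ i ∈ s, ENNReal.ofReal (‖x - a i‖ ^ 2) ∂P

lemma nine_inv (t : ℝ) : ENNReal.ofReal (t / 9) = 9⁻¹ * ENNReal.ofReal t := by
  rw [div_eq_inv_mul, ENNReal.ofReal_mul (by norm_num), ENNReal.ofReal_inv_of_pos (by norm_num)]
  norm_num

lemma inv_3_9 : (3⁻¹ : ℝ≥0∞) * 9⁻¹ = 27⁻¹ := by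
  rw [← ENNReal.mul_inv (by simp) (by simp)]; norm_num

lemma erf_step {P : Measure E2} (hP : SS P) (s : Finset E2) (a : E2 → E2) :
    erf P s a = 27⁻¹ * ∑ k, erf P s (fun i => Tm k (a i)) := by
  unfold erf
  have hm : ∀ b : E2 → E2, Measurable fun x : E2 => ⨅ i ∈ s, ENNReal.ofReal (‖x - b i‖ ^ 2) := by
    intro b
    refine Measurable.biInf _ s.countable_toSet fun i _ => ?_
    fun_prop
  rw [lint_self hP (hm a), ← inv_3_9, mul_assoc, Finset.mul_sum (a := 9⁻¹)]
  congr 1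
  refine Finset.sum_congr rfl fun k _ => ?_
  rw [← lintegral_const_mul _ (hm _)]
  refine lintegral_congr fun x => ?_
  have h0 : (9⁻¹ : ℝ≥0∞) ≠ 0 := by simp
  have h1 : (9⁻¹ : ℝ≥0∞) ≠ ⊤ := by simp
  simp only [Smap_dist, nine_inv, ENNReal.mul_iInf_of_ne h0 h1]

/-- Affine functions: the positive part is integrated to at most the average over the vertices. -/
lemma affine_pos {P : Measure E2} [IsProbabilityMeasure P] (hP : SS P) (u v w : ℝ) :
    ∫⁻ x, ENNReal.ofReal (bc 0 x * u + bc 1 x * v + bc 2 x * w) ∂P ≤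
      ENNReal.ofReal ((max u 0 + max v 0 + max w 0) / 3) := by
  have hi : Integrable (fun x => bc 0 x * max u 0 + bc 1 x * max v 0 + bc 2 x * max w 0) P :=
    (((bc_int hP 0).mul_const _).add ((bc_int hP 1).mul_const _)).add ((bc_int hP 2).mul_const _)
  have e : ∫ x, (bc 0 x * max u 0 + bc 1 x * max v 0 + bc 2 x * max w 0) ∂P
      = (max u 0 + max v 0 + max w 0) / 3 := by
    have hr : Integrable (fun x => bc 0 x * max u 0 + bc 1 x * max v 0) P :=
      ((bc_int hP 0).mul_const _).add ((bc_int hP 1).mul_const _)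
    rw [integral_add hr ((bc_int hP 2).mul_const _),
      integral_add ((bc_int hP 0).mul_const _) ((bc_int hP 1).mul_const _),
      integral_mul_const, integral_mul_const, integral_mul_const, bc_mean hP, bc_mean hP,
      bc_mean hP]
    ring
  rw [← e, ofReal_integral_eq_lintegral_ofReal hi]
  · refine lintegral_mono_ae ?_
    filter_upwards [bc_bound hP] with x hx
    have h0 := (hx 0).1
    have h1 := (hx 1).1
    have h2 := (hx 2).1
    gcongr <;> exact le_max_left _ _
  · filter_upwards [bc_bound hP] with x hx
    have h0 := (hx 0).1
    have h1 := (hx 1).1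
    have h2 := (hx 2).1
    simp only [Pi.zero_apply]
    positivity

lemma gain {P : Measure E2} [IsProbabilityMeasure P] (hP : SS P) (a : E2) :
    ∫⁻ x, ENNReal.ofReal (‖x - cc‖ ^ 2 + 2 / 27 - ‖x - a‖ ^ 2) ∂P ≤
      ENNReal.ofReal (GG (bc 0 a) (bc 1 a) (bc 2 a)) := by
  rw [lint_self hP (by fun_prop)]
  have ha := bc_sum a
  obtain ⟨q, hq⟩ : ∃ q, q = bc 0 a ^ 2 + bc 1 a ^ 2 + bc 2 a ^ 2 := ⟨_, rfl⟩
  have e : ∀ k x, ‖Smap k x - cc‖ ^ 2 + 2 / 27 - ‖Smap k x - a‖ ^ 2 =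
      bc 0 x * ff (bc k a) (bc 0 a) q + bc 1 x * ff (bc k a) (bc 1 a) q +
        bc 2 x * ff (bc k a) (bc 2 a) q := by
    intro k x
    rw [dist_bc, dist_bc, bc_cc, bc_cc, bc_cc, bc_tr, bc_tr, bc_tr, hq]
    unfold ff
    have hx := bc_sum x
    have hx2 : bc 2 x = 1 - bc 0 x - bc 1 x := by linarith
    have ha2 : bc 2 a = 1 - bc 0 a - bc 1 a := by linarith
    rw [hx2]
    fin_cases k <;> simp <;> rw [ha2] <;> ring
  simp only [e]
  calc _ ≤ 3⁻¹ * ∑ k, ENNReal.ofReal ((max (ff (bc k a) (bc 0 a) q) 0 +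
        max (ff (bc k a) (bc 1 a) q) 0 + max (ff (bc k a) (bc 2 a) q) 0) / 3) := by
        gcongr; exact affine_pos hP _ _ _
    _ = _ := by
        rw [← ENNReal.ofReal_sum_of_nonneg (fun k _ => by positivity)]
        rw [show (3⁻¹ : ℝ≥0∞) = ENNReal.ofReal 3⁻¹ by
          rw [ENNReal.ofReal_inv_of_pos (by norm_num)]; norm_num,
          ← ENNReal.ofReal_mul (by norm_num)]
        congr 1
        rw [Fin.sum_univ_three]
        simp only [GG, ← hq]
        ring

lemma lower_base {P : Measure E2} [IsProbabilityMeasure P] (hP : SS P) (s : Finset E2)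
    (a : E2 → E2) : ENNReal.ofReal (13 / 54) ≤ erf P s a +
      ∑ i ∈ s, ENNReal.ofReal (GG (bc 0 (a i)) (bc 1 (a i)) (bc 2 (a i))) := by
  have hpi : ∫⁻ x, ENNReal.ofReal (‖x - cc‖ ^ 2 + 2 / 27) ∂P = ENNReal.ofReal (13 / 54) := by
    have hi := (second_moment hP cc).1
    have hr : Integrable (fun x => ‖x - cc‖ ^ 2 + 2 / 27) P := hi.add (integrable_const _)
    rw [← ofReal_integral_eq_lintegral_ofReal hr,
      integral_add hi (integrable_const _), (second_moment hP cc).2]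
    · simp; norm_num
    · exact Filter.Eventually.of_forall fun x => by positivity
  calc _ = ∫⁻ x, ENNReal.ofReal (‖x - cc‖ ^ 2 + 2 / 27) ∂P := hpi.symm
    _ ≤ ∫⁻ x, ((⨅ i ∈ s, ENNReal.ofReal (‖x - a i‖ ^ 2)) +
        ∑ i ∈ s, ENNReal.ofReal (‖x - cc‖ ^ 2 + 2 / 27 - ‖x - a i‖ ^ 2)) ∂P := by
        refine lintegral_mono fun x => ?_
        rw [ENNReal.iInf₂_add]
        refine le_iInf₂ fun i hi => ?_
        calc _ = ENNReal.ofReal (‖x - a i‖ ^ 2 + (‖x - cc‖ ^ 2 + 2 / 27 - ‖x - a i‖ ^ 2)) := by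
              congr 1; ring
          _ ≤ _ := ENNReal.ofReal_add_le
          _ ≤ _ := by
              gcongr
              exact Finset.single_le_sum
                (f := fun i => ENNReal.ofReal (‖x - cc‖ ^ 2 + 2 / 27 - ‖x - a i‖ ^ 2))
                (fun _ _ => bot_le) hi
    _ = erf P s a + ∑ i ∈ s, ∫⁻ x, ENNReal.ofReal (‖x - cc‖ ^ 2 + 2 / 27 - ‖x - a i‖ ^ 2) ∂P := by
        rw [lintegral_add_right _ (by fun_prop), lintegral_finsetSum _ (fun i _ => by fun_prop)]
        rfl
    _ ≤ _ := by
        gcongr; exact gain hP _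

lemma lower {P : Measure E2} [IsProbabilityMeasure P] (hP : SS P) (s : Finset E2) (l : ℕ) :
    ∀ a : E2 → E2, ENNReal.ofReal (3 ^ l * (13 / 54)) ≤ 27 ^ l * erf P s a +
      ∑ i ∈ s, ENNReal.ofReal (HH l (bc 0 (a i)) (bc 1 (a i)) (bc 2 (a i))) := by
  induction l with
  | zero => intro a; simpa [HH] using lower_base hP s a
  | succ l ih =>
    intro a
    calc ENNReal.ofReal (3 ^ (l + 1) * (13 / 54))
        = ∑ k : Fin 3, ENNReal.ofReal (3 ^ l * (13 / 54)) := by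
          rw [← ENNReal.ofReal_sum_of_nonneg (fun k _ => by positivity)]
          congr 1; simp; ring
      _ ≤ ∑ k : Fin 3, (27 ^ l * erf P s (fun i => Tm k (a i)) +
          ∑ i ∈ s, ENNReal.ofReal (HH l (bc 0 (Tm k (a i))) (bc 1 (Tm k (a i)))
            (bc 2 (Tm k (a i))))) := by
          gcongr with k _; exact ih _
      _ = _ := by
          rw [Finset.sum_add_distrib, Finset.sum_comm, erf_step hP s a, ← Finset.mul_sum]
          congr 1
          · rw [pow_succ, mul_assoc, ← mul_assoc 27, ENNReal.mul_inv_cancel (by simp) (by simp),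
              one_mul]
          · refine Finset.sum_congr rfl fun i _ => ?_
            rw [← ENNReal.ofReal_sum_of_nonneg (fun k _ => HH_nonneg _ _ _ _), Fin.sum_univ_three]
            simp [bc_Tm, HH]

lemma lower_final {P : Measure E2} [IsProbabilityMeasure P] (hP : SS P) (l n : ℕ) (hl : 1 ≤ l)
    (α : Set E2) (hα : α.Finite) (hn : α.ncard ≤ n) :
    ENNReal.ofReal (3 ^ l * (13 / 54)) ≤ 27 ^ l * err P α + ENNReal.ofReal (n * (2 / 27)) := by
  obtain ⟨m, rfl⟩ : ∃ m, l = m + 1 := ⟨l - 1, by omega⟩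
  have h := lower hP hα.toFinset (m + 1) id
  have e : erf P hα.toFinset id = err P α := by simp [erf, err]
  rw [e] at h
  refine h.trans ?_
  gcongr
  calc _ ≤ ∑ i ∈ hα.toFinset, ENNReal.ofReal (2 / 27) := by
        gcongr; exact HH_le _ _ _ _ (bc_sum _)
    _ = ENNReal.ofReal (α.ncard * (2 / 27)) := by
        rw [Finset.sum_const, ← Set.ncard_eq_toFinset_card _ hα, nsmul_eq_mul,
          ENNReal.ofReal_mul (by positivity)]
        simp
    _ ≤ _ := by gcongr

lemma err_mono (P : Measure E2) {α β : Set E2} (h : α ⊆ β) : err P β ≤ err P α :=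
  lintegral_mono fun _ => biInf_mono h

lemma upper_step {P : Measure E2} (hP : SS P) (γ : Fin 3 → Set E2) (hγ : ∀ k, (γ k).Finite) :
    err P (⋃ k, Smap k '' γ k) ≤ 27⁻¹ * ∑ k, err P (γ k) := by
  have hm : ∀ α : Set E2, α.Finite → Measurable fun x : E2 => ⨅ i ∈ α, ENNReal.ofReal (‖x - i‖ ^ 2) := by
    intro α hα
    refine Measurable.biInf _ hα.countable fun i _ => ?_
    fun_prop
  unfold err
  rw [lint_self hP (hm _ (Set.finite_iUnion fun k => (hγ k).image _)), ← inv_3_9, mul_assoc,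
    Finset.mul_sum (a := 9⁻¹)]
  gcongr with k _
  rw [← lintegral_const_mul _ (hm _ (hγ k))]
  refine lintegral_mono fun x => ?_
  have h0 : (9⁻¹ : ℝ≥0∞) ≠ 0 := by simp
  have h1 : (9⁻¹ : ℝ≥0∞) ≠ ⊤ := by simp
  simp only [ENNReal.mul_iInf_of_ne h0 h1]
  refine le_iInf₂ fun i hi => ?_
  refine (iInf₂_le (Smap k i) (Set.mem_iUnion.mpr ⟨k, Set.mem_image_of_mem _ hi⟩)).trans ?_
  rw [Smap_dist, Tm_Smap, nine_inv]

lemma Sword_cons {l : ℕ} (k : Fin 3) (ω : Fin l → Fin 3) (x : E2) :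
    Sword (Fin.cons k ω : Fin (l + 1) → Fin 3) x = Smap k (Sword ω x) := by
  simp [Sword, List.ofFn_succ]

lemma upper {P : Measure E2} (hP : SS P) (l : ℕ) :
    ∀ β : (Fin l → Fin 3) → Set E2, (∀ ω, (β ω).Finite) →
      27 ^ l * err P (⋃ ω, Sword ω '' β ω) ≤ ∑ ω, err P (β ω) := by
  induction l with
  | zero =>
    intro β _
    have : (⋃ ω, Sword ω '' β ω) = β default := by
      ext x
      simp only [Set.mem_iUnion, Set.mem_image]
      constructor
      · rintro ⟨ω, y, hy, rfl⟩
        rwa [Subsingleton.elim ω default] at hy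
      · intro hx
        exact ⟨default, x, hx, rfl⟩
    rw [this, Fintype.sum_unique, pow_zero, one_mul, Subsingleton.elim (default : Fin 0 → Fin 3)]
  | succ l ih =>
    intro β hβ
    have hU : (⋃ ω, Sword ω '' β ω) =
        ⋃ k, Smap k '' ⋃ ω : Fin l → Fin 3, Sword ω '' β (Fin.cons k ω) := by
      ext x
      simp only [Set.mem_iUnion, Set.mem_image]
      constructor
      · rintro ⟨ω, y, hy, rfl⟩
        refine ⟨ω 0, Sword (Fin.tail ω) y, ⟨Fin.tail ω, y, ?_, rfl⟩, ?_⟩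
        · rwa [Fin.cons_self_tail]
        · rw [← Sword_cons, Fin.cons_self_tail]
      · rintro ⟨k, z, ⟨ω, y, hy, rfl⟩, rfl⟩
        exact ⟨Fin.cons k ω, y, hy, Sword_cons k ω y⟩
    have hs : ∑ ω, err P (β ω) = ∑ k : Fin 3, ∑ ω : Fin l → Fin 3, err P (β (Fin.cons k ω)) := by
      rw [← Fintype.sum_prod_type', ← (Fin.consEquiv fun _ => Fin 3).sum_comp]
      rfl
    rw [hU, hs]
    calc _ ≤ 27 ^ (l + 1) * (27⁻¹ * ∑ k, err P (⋃ ω : Fin l → Fin 3, Sword ω '' β (Fin.cons k ω))) := by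
          gcongr
          exact upper_step hP _ fun k => Set.finite_iUnion fun ω => (hβ _).image _
      _ = ∑ k, 27 ^ l * err P (⋃ ω : Fin l → Fin 3, Sword ω '' β (Fin.cons k ω)) := by
          rw [pow_succ, mul_assoc, ← mul_assoc 27, ENNReal.mul_inv_cancel (by simp) (by simp),
              one_mul, Finset.mul_sum]
      _ ≤ _ := by
          gcongr with k _
          exact ih _ fun ω => hβ _

lemma err_one {P : Measure E2} [IsProbabilityMeasure P] (hP : SS P) (a : E2) :
    err P {a} = ENNReal.ofReal (1 / 6 + ‖cc - a‖ ^ 2) := by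
  simp only [err, Set.mem_singleton_iff, iInf_iInf_eq_left]
  exact second_moment_l hP a

lemma V2_le {P : Measure E2} [IsProbabilityMeasure P] (hP : SS P) :
    quantErr P 2 ≤ ENNReal.ofReal (5 / 54) := by
  set m : E2 := pt (1 / 2) (√3 / 18) with hm
  have hbm : bc 0 m = 4 / 9 ∧ bc 1 m = 4 / 9 ∧ bc 2 m = 1 / 9 := by
    have h := s3
    have h' := s3pos.ne'
    refine ⟨?_, ?_, ?_⟩ <;> simp [bc, hm, pt_zero, pt_one] <;> field_simp <;> norm_num
  have hsub : (⋃ k, Smap k '' (![{Tm 0 m}, {Tm 1 m}, {cc}] : Fin 3 → Set E2) k) ⊆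
      {m, Smap 2 cc} := by
    have hST : ∀ i x, Smap i (Tm i x) = x := by
      intro i x; rw [Smap_eq, Tm, smul_smul]; simp
    intro x hx
    obtain ⟨k, hk⟩ := Set.mem_iUnion.mp hx
    fin_cases k
    · simp [hST] at hk; simp [hk]
    · simp [hST] at hk; simp [hk]
    · simp at hk; simp [hk]
  have hfin : ∀ k, ((![{Tm 0 m}, {Tm 1 m}, {cc}] : Fin 3 → Set E2) k).Finite := by
    intro k; fin_cases k <;> simp
  have h1 := upper_step hP ![{Tm 0 m}, {Tm 1 m}, {cc}] hfin
  have hf2 : ({m, Smap 2 cc} : Set E2).Finite := by simp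
  have hq : quantErr P 2 ≤ err P (⋃ k, Smap k '' (![{Tm 0 m}, {Tm 1 m}, {cc}] : Fin 3 → Set E2) k) :=
    iInf₂_le _ ⟨hf2.subset hsub, (Set.ncard_le_ncard hsub hf2).trans ((Set.ncard_insert_le _ _).trans (by simp))⟩
  refine (hq.trans h1).trans (le_of_eq ?_)
  rw [Fin.sum_univ_three]
  simp only [Matrix.cons_val_zero, Matrix.cons_val_one, Matrix.cons_val, err_one hP, dist_bc,
    bc_cc, bc_Tm, hbm]
  rw [← ENNReal.ofReal_add (by positivity) (by positivity),
    ← ENNReal.ofReal_add (by positivity) (by positivity),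
    show (27⁻¹ : ℝ≥0∞) = ENNReal.ofReal 27⁻¹ by
          rw [ENNReal.ofReal_inv_of_pos (by norm_num)]; norm_num,
    ← ENNReal.ofReal_mul (by norm_num)]
  congr 1
  simp
  norm_num
/-- For ℓ ≥ 1 and 3^ℓ < n ≤ 2·3^ℓ, any optimal set of two-means α₂, and any
J ⊆ {1,2,3}^ℓ with card J = n − 3^ℓ, the set
{S_ω(c) : ω ∉ J} ∪ ⋃_{ω ∈ J} S_ω(α₂) is an optimal set of n-means for the R-measure P,
where c = (1/2, √3/6). -/
theorem stmt_14 (P : Measure E2) [IsProbabilityMeasure P]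
    (hP : P = (3 : ℝ≥0∞)⁻¹ • (P.map S1 + P.map S2 + P.map S3))
    (ℓ n : ℕ) (hℓ : 1 ≤ ℓ) (h1 : 3 ^ ℓ < n) (h2 : n ≤ 2 * 3 ^ ℓ)
    (α₂ : Set E2) (hα₂ : IsOptimal P 2 α₂)
    (J : Set (Fin ℓ → Fin 3)) (hJ : J.ncard = n - 3 ^ ℓ) :
    IsOptimal P n
      ((fun ω : Fin ℓ → Fin 3 => Sword ω (pt (1/2) (Real.sqrt 3 / 6))) '' Jᶜ
        ∪ ⋃ ω ∈ J, Sword ω '' α₂) := by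

  classical
  have hS : SS P := hP
  obtain ⟨k, rfl⟩ : ∃ k, n = 3 ^ ℓ + k := ⟨n - 3 ^ ℓ, by omega⟩
  have hk : k ≤ 3 ^ ℓ := by omega
  have hJk : J.ncard = k := by omega
  set β : (Fin ℓ → Fin 3) → Set E2 := fun ω => if ω ∈ J then α₂ else {cc} with hβ
  have hset : ((fun ω : Fin ℓ → Fin 3 => Sword ω (pt (1/2) (Real.sqrt 3 / 6))) '' Jᶜ
        ∪ ⋃ ω ∈ J, Sword ω '' α₂) = ⋃ ω, Sword ω '' β ω := by
    ext x
    simp only [Set.mem_union, Set.mem_image, Set.mem_compl_iff, Set.mem_iUnion, exists_prop, hβ]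
    constructor
    · rintro (⟨ω, h, rfl⟩ | ⟨ω, h, y, hy, rfl⟩)
      · exact ⟨ω, cc, by simp [h], rfl⟩
      · exact ⟨ω, y, by simp [h, hy], rfl⟩
    · rintro ⟨ω, y, hy, rfl⟩
      by_cases h : ω ∈ J
      · exact Or.inr ⟨ω, h, y, by simpa [h] using hy, rfl⟩
      · simp only [h, if_false, Set.mem_singleton_iff] at hy
        exact Or.inl ⟨ω, h, by rw [hy]; rfl⟩
  have hβf : ∀ ω, (β ω).Finite := by
    intro ω; simp only [hβ]; split_ifs
    · exact hα₂.1
    · simp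
  have hcard : Fintype.card (Fin ℓ → Fin 3) = 3 ^ ℓ := by simp
  have hJc : (Finset.univ.filter (· ∈ J)).card = k := by
    rw [← hJk, Set.ncard_eq_toFinset_card']
    congr 1
    ext ω
    simp
  have hJc' : (Finset.univ.filter (¬ · ∈ J)).card = 3 ^ ℓ - k := by
    have := Finset.card_filter_add_card_filter_not (s := (Finset.univ : Finset (Fin ℓ → Fin 3)))
      (fun ω => ω ∈ J)
    rw [hJc, Finset.card_univ, hcard] at this
    omega
  have hsize : (⋃ ω, Sword ω '' β ω).ncard ≤ 3 ^ ℓ + k := by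
    have h3 : (⋃ ω, Sword ω '' β ω).ncard ≤ ∑ ω, (Sword ω '' β ω).ncard := by
      simpa using Finset.set_ncard_biUnion_le Finset.univ fun ω => Sword ω '' β ω
    refine h3.trans ?_
    calc _ ≤ ∑ ω : Fin ℓ → Fin 3, (if ω ∈ J then 2 else 1) := by
          refine Finset.sum_le_sum fun ω _ => (Set.ncard_image_le (hβf ω)).trans ?_
          simp only [hβ]; split_ifs
          · exact hα₂.2.1
          · simp
      _ = _ := by
          rw [Finset.sum_ite, Finset.sum_const, Finset.sum_const, hJc, hJc']
          simp; omega
  rw [hset]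
  have hfin : (⋃ ω, Sword ω '' β ω).Finite := Set.finite_iUnion fun ω => (hβf ω).image _
  refine ⟨hfin, hsize, le_antisymm ?_ (iInf₂_le _ ⟨hfin, hsize⟩)⟩
  refine le_iInf₂ fun α hα => ?_
  have hlow := lower_final hS ℓ _ hℓ α hα.1 hα.2
  have hup : 27 ^ ℓ * err P (⋃ ω, Sword ω '' β ω) ≤
      ENNReal.ofReal (k * (5 / 54) + (3 ^ ℓ - k) * (1 / 6)) := by
    refine (upper hS ℓ β hβf).trans ?_
    calc _ ≤ ∑ ω : Fin ℓ → Fin 3,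
          (if ω ∈ J then ENNReal.ofReal (5 / 54) else ENNReal.ofReal (1 / 6)) := by
          refine Finset.sum_le_sum fun ω _ => ?_
          simp only [hβ]; split_ifs
          · rw [hα₂.2.2]; exact V2_le hS
          · rw [err_one hS]; simp
      _ = _ := by
          rw [Finset.sum_ite, Finset.sum_const, Finset.sum_const, hJc, hJc', nsmul_eq_mul,
            nsmul_eq_mul]
          have hk' : (k : ℝ) ≤ 3 ^ ℓ := by exact_mod_cast hk
          have hk2 : (0 : ℝ) ≤ 3 ^ ℓ - k := by linarith
          rw [ENNReal.ofReal_add (by positivity) (by positivity),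
            ENNReal.ofReal_mul (by positivity), ENNReal.ofReal_mul hk2,
            ← ENNReal.ofReal_natCast k, ← ENNReal.ofReal_natCast (3 ^ ℓ - k), Nat.cast_sub hk]
          push_cast
          rfl
  have h27 : (27 : ℝ≥0∞) ^ ℓ ≠ 0 := by simp
  have h27' : (27 : ℝ≥0∞) ^ ℓ ≠ ⊤ := by simp
  rw [← ENNReal.mul_le_mul_iff_right h27 h27']
  refine hup.trans ?_
  rw [← ENNReal.add_le_add_iff_right
    (ENNReal.ofReal_ne_top (r := ((3 ^ ℓ + k : ℕ) : ℝ) * (2 / 27)))]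
  refine le_trans (le_of_eq ?_) hlow
  have hk' : (k : ℝ) ≤ 3 ^ ℓ := by exact_mod_cast hk
  have hk2 : (0 : ℝ) ≤ 3 ^ ℓ - k := by linarith
  rw [← ENNReal.ofReal_add (by positivity) (by positivity)]
  congr 1
  push_cast
  ring

end
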